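/- Strong duality (necessity of regularity): if there exist τ ∈ Δ(Δ(Ω)) feasible for the primal problem (P) and P ∈ C(Ω) feasible for the dual problem (D) with ∫_Ω P(ω) dμ₀(ω) = ∫_{Δ(Ω)} V(μ) dτ(μ), then the persuasion problem is regular, i.e. the concave closure V̂ is superdifferentiable at μ₀. -/

import Mathlib

open MeasureTheory

/-- Convex combination `t μ + (1 - t) η` of two probability measures. -/
noncomputable def mix {Ω : Type*} [MeasurableSpace Ω] (t : NNReal) (ht : t ≤ 1)
    (μ η : ProbabilityMeasure Ω) : ProbabilityMeasure Ω :=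
  ⟨t • (μ : Measure Ω) + (1 - t) • (η : Measure Ω), by
    constructor
    simp only [Measure.coe_add, Pi.add_apply, Measure.smul_apply, smul_eq_mul,
      measure_univ, mul_one, ENNReal.smul_def]
    rw [← ENNReal.coe_add, add_tsub_cancel_of_le ht, ENNReal.coe_one]⟩

/-- A function `H : Δ(Ω) → ℝ` is affine if it respects convex combinations. -/
def IsAffine {Ω : Type*} [MeasurableSpace Ω] (H : ProbabilityMeasure Ω → ℝ) : Prop :=
  ∀ (μ η : ProbabilityMeasure Ω) (t : NNReal) (ht : t ≤ 1),
    H (mix t ht μ η) = (t : ℝ) * H μ + (1 - (t : ℝ)) * H η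

/-- The concave closure `V̂(μ) = inf {H(μ) : H affine continuous, H ≥ V}`. -/
noncomputable def concaveClosure {Ω : Type*} [MeasurableSpace Ω] [TopologicalSpace Ω]
    [OpensMeasurableSpace Ω] (V : ProbabilityMeasure Ω → ℝ) (μ : ProbabilityMeasure Ω) : ℝ :=
  sInf {r : ℝ | ∃ H : ProbabilityMeasure Ω → ℝ,
    Continuous H ∧ IsAffine H ∧ (∀ μ', V μ' ≤ H μ') ∧ r = H μ}

/-- The persuasion problem is regular if the concave closure `V̂` is superdifferentiable at
`μ₀`: there is an affine continuous `V̄` with `V̄(μ₀) = V̂(μ₀)` and `V̄ ≥ V̂` on `Δ(Ω)`. -/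
def RegularPersuasion {Ω : Type*} [MeasurableSpace Ω] [TopologicalSpace Ω]
    [OpensMeasurableSpace Ω] (V : ProbabilityMeasure Ω → ℝ) (μ₀ : ProbabilityMeasure Ω) : Prop :=
  ∃ Vbar : ProbabilityMeasure Ω → ℝ, Continuous Vbar ∧ IsAffine Vbar ∧
    Vbar μ₀ = concaveClosure V μ₀ ∧ ∀ μ, concaveClosure V μ ≤ Vbar μ

/-- `τ ∈ Δ(Δ(Ω))` is feasible for the primal problem (P) if its barycenter is `μ₀`. -/
def PrimalFeasible {Ω : Type*} [MeasurableSpace Ω] [TopologicalSpace Ω]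
    [MeasurableSpace (ProbabilityMeasure Ω)]
    (μ₀ : ProbabilityMeasure Ω) (τ : ProbabilityMeasure (ProbabilityMeasure Ω)) : Prop :=
  ∀ f : Ω → ℝ, Continuous f →
    ∫ μ, (∫ ω, f ω ∂(μ : Measure Ω)) ∂(τ : Measure (ProbabilityMeasure Ω))
      = ∫ ω, f ω ∂(μ₀ : Measure Ω)

/-- A continuous `P : Ω → ℝ` is feasible for the dual problem (D) if `∫ P dμ ≥ V μ` for all μ. -/
def DualFeasible {Ω : Type*} [MeasurableSpace Ω] [TopologicalSpace Ω]
    (V : ProbabilityMeasure Ω → ℝ) (P : Ω → ℝ) : Prop :=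
  Continuous P ∧ ∀ μ : ProbabilityMeasure Ω, V μ ≤ ∫ ω, P ω ∂(μ : Measure Ω)

section Helpers

variable {Ω : Type*} [MetricSpace Ω] [CompactSpace Ω] [MeasurableSpace Ω] [BorelSpace Ω]

lemma integrable_of_cont {f : Ω → ℝ} (hf : Continuous f) (μ : Measure Ω) [IsFiniteMeasure μ] :
    Integrable f μ :=
  (BoundedContinuousFunction.mkOfCompact ⟨f, hf⟩).integrable μ

lemma continuous_integral_pm {f : Ω → ℝ} (hf : Continuous f) :
    Continuous fun μ : ProbabilityMeasure Ω => ∫ ω, f ω ∂(μ : Measure Ω) :=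
  ProbabilityMeasure.continuous_integral_boundedContinuousFunction
    (BoundedContinuousFunction.mkOfCompact ⟨f, hf⟩)

lemma isAffine_integral {f : Ω → ℝ} (hf : Continuous f) :
    IsAffine fun μ : ProbabilityMeasure Ω => ∫ ω, f ω ∂(μ : Measure Ω) := by
  intro μ η t ht
  change ∫ ω, f ω ∂(t • (μ : Measure Ω) + (1 - t) • (η : Measure Ω)) = _
  rw [integral_add_measure (integrable_of_cont hf _) (integrable_of_cont hf _),
    integral_smul_nnreal_measure, integral_smul_nnreal_measure]
  simp [NNReal.smul_def, NNReal.coe_sub ht]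

/-- Two affine functionals agreeing on Dirac masses agree on finitely supported measures. -/
lemma affine_eq_finite {H I : ProbabilityMeasure Ω → ℝ} (hH : IsAffine H) (hI : IsAffine I)
    (hd : ∀ x, H (diracProba x) = I (diracProba x)) (s : Finset Ω) :
    ∀ ν : ProbabilityMeasure Ω, (ν : Measure Ω) (s : Set Ω)ᶜ = 0 → H ν = I ν := by
  classical
  induction s using Finset.induction_on with
  | empty => intro ν h; simp at h
  | insert a s ha ih =>
    intro ν h
    have hle : ν {a} ≤ 1 := ν.apply_le_one _
    have hc : (ν : Measure Ω) {a}ᶜ = ((1 - ν {a} : NNReal) : ENNReal) := by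
      rw [prob_compl_eq_one_sub (measurableSet_singleton a)]
      simp
    have key : ∃ η : ProbabilityMeasure Ω, H η = I η ∧ ν = mix (ν {a}) hle (diracProba a) η := by
      by_cases h0 : (ν : Measure Ω) {a}ᶜ = 0
      · refine ⟨diracProba a, hd a, ?_⟩
        have h1 : 1 - ν {a} = 0 := by rw [h0] at hc; exact_mod_cast hc.symm
        have h2 : ν {a} = 1 := le_antisymm hle (tsub_eq_zero_iff_le.1 h1)
        apply Subtype.ext
        change (ν : Measure Ω) = ν {a} • Measure.dirac a + (1 - ν {a}) • Measure.dirac a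
        rw [h1, h2, one_smul, zero_smul, add_zero]
        have h3 := Measure.restrict_eq_self_of_ae_mem (μ := (ν : Measure Ω)) (s := {a}) h0
        rw [← h3, Measure.restrict_singleton]
        have : (ν : Measure Ω) {a} = 1 := by
          rw [← ProbabilityMeasure.ennreal_coeFn_eq_coeFn_toMeasure, h2]; rfl
        rw [this, one_smul]
      · have hp := ProbabilityTheory.cond_isProbabilityMeasure h0
        refine ⟨⟨ProbabilityTheory.cond (ν : Measure Ω) {a}ᶜ, hp⟩, ih _ ?_, ?_⟩
        · change ProbabilityTheory.cond (ν : Measure Ω) {a}ᶜ _ = 0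
          rw [ProbabilityTheory.cond_apply (measurableSet_singleton a).compl]
          have : ({a}ᶜ ∩ (s : Set Ω)ᶜ) = ((insert a s : Finset Ω) : Set Ω)ᶜ := by
            ext; simp
          rw [this, h, mul_zero]
        · apply Subtype.ext
          change (ν : Measure Ω) = ν {a} • Measure.dirac a +
            (1 - ν {a}) • ProbabilityTheory.cond (ν : Measure Ω) {a}ᶜ
          have e1 : (1 - ν {a}) • ProbabilityTheory.cond (ν : Measure Ω) {a}ᶜ
              = (ν : Measure Ω).restrict {a}ᶜ := by
            change ((1 - ν {a} : NNReal) : ENNReal) • ProbabilityTheory.cond (ν : Measure Ω) {a}ᶜ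
              = _
            rw [ProbabilityTheory.cond, ← hc, smul_smul,
              ENNReal.mul_inv_cancel h0 (measure_ne_top _ _), one_smul]
          have e2 : ν {a} • Measure.dirac a = (ν : Measure Ω).restrict {a} := by
            rw [Measure.restrict_singleton,
              ← ProbabilityMeasure.ennreal_coeFn_eq_coeFn_toMeasure]
            rfl
          rw [e1, e2, Measure.restrict_add_restrict_compl (measurableSet_singleton a)]
    obtain ⟨η, hη, hmix⟩ := key
    rw [hmix, hH, hI, hη, hd]

/-- Every continuous affine functional on `Δ(Ω)` is integration of a continuous function. -/
lemma affine_repr {H : ProbabilityMeasure Ω → ℝ} (hc : Continuous H) (hH : IsAffine H)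
    (μ : ProbabilityMeasure Ω) :
    H μ = ∫ ω, H (diracProba ω) ∂(μ : Measure Ω) := by
  have hcont : Continuous fun ω : Ω => H (diracProba ω) := hc.comp continuous_diracProba
  obtain ⟨y⟩ : Nonempty Ω := μ.nonempty
  let f : ℕ → SimpleFunc Ω Ω := fun n =>
    SimpleFunc.approxOn id measurable_id Set.univ y (Set.mem_univ y) n
  have hf : ∀ x, Filter.Tendsto (fun n => f n x) Filter.atTop (nhds x) := fun x =>
    SimpleFunc.tendsto_approxOn measurable_id (Set.mem_univ y) (by simp)
  let ν : ℕ → ProbabilityMeasure Ω := fun n => μ.map (f n).measurable.aemeasurable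
  have hν : Filter.Tendsto ν Filter.atTop (nhds μ) := by
    rw [ProbabilityMeasure.tendsto_iff_forall_integral_tendsto]
    intro g
    have : ∀ n, ∫ ω, g ω ∂(ν n : Measure Ω) = ∫ ω, g (f n ω) ∂(μ : Measure Ω) := fun n =>
      integral_map (f n).measurable.aemeasurable g.continuous.aestronglyMeasurable
    simp_rw [this]
    refine tendsto_integral_of_dominated_convergence (fun _ => ‖g‖) ?_ (integrable_const _) ?_ ?_
    · intro n
      exact (g.continuous.measurable.comp (f n).measurable).aestronglyMeasurable
    · intro n
      exact Filter.Eventually.of_forall fun x => g.norm_coe_le_norm _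
    · exact Filter.Eventually.of_forall fun x => (g.continuous.tendsto x).comp (hf x)
  have h1 := (hc.tendsto μ).comp hν
  have h2 := ((continuous_integral_pm hcont).tendsto μ).comp hν
  refine tendsto_nhds_unique h1 (h2.congr fun n => ?_)
  symm
  refine affine_eq_finite hH (isAffine_integral hcont) ?_ (f n).range (ν n) ?_
  · intro x
    change _ = ∫ ω, H (diracProba ω) ∂(Measure.dirac x)
    rw [integral_dirac]
  · change (Measure.map (f n) (μ : Measure Ω)) _ = 0
    rw [Measure.map_apply (f n).measurable (Finset.measurableSet _).compl]
    convert measure_empty (μ := (μ : Measure Ω))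
    ext x
    simp

end Helpers

/-- **Strong duality, necessity** (Theorem 2, "only if" direction): if there are feasible `τ`
and `P` whose values coincide, then the persuasion problem is regular. -/
theorem regular_of_strong_duality
    {Ω : Type*} [MetricSpace Ω] [CompactSpace Ω] [MeasurableSpace Ω] [BorelSpace Ω]
    [MeasurableSpace (ProbabilityMeasure Ω)] [OpensMeasurableSpace (ProbabilityMeasure Ω)]
    (μ₀ : ProbabilityMeasure Ω)
    (hfull : ∀ U : Set Ω, IsOpen U → U.Nonempty → 0 < (μ₀ : Measure Ω) U)
    (V : ProbabilityMeasure Ω → ℝ) (hV : UpperSemicontinuous V)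
    (τ : ProbabilityMeasure (ProbabilityMeasure Ω))
    (hτ : PrimalFeasible μ₀ τ)
    (hVint : Integrable V (τ : Measure (ProbabilityMeasure Ω)))
    (P : Ω → ℝ) (hP : DualFeasible V P)
    (heq : ∫ ω, P ω ∂(μ₀ : Measure Ω) = ∫ μ, V μ ∂(τ : Measure (ProbabilityMeasure Ω))) :
    RegularPersuasion V μ₀ := by
  obtain ⟨hPc, hPV⟩ := hP
  have hbdd : ∀ μ, BddBelow {r : ℝ | ∃ H : ProbabilityMeasure Ω → ℝ,
      Continuous H ∧ IsAffine H ∧ (∀ μ', V μ' ≤ H μ') ∧ r = H μ} := by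
    intro μ
    refine ⟨V μ, ?_⟩
    rintro r ⟨H, -, -, h, rfl⟩
    exact h μ
  have hle : ∀ μ : ProbabilityMeasure Ω,
      concaveClosure V μ ≤ ∫ ω, P ω ∂(μ : Measure Ω) := fun μ =>
    csInf_le (hbdd μ) ⟨_, continuous_integral_pm hPc, isAffine_integral hPc, hPV, rfl⟩
  refine ⟨_, continuous_integral_pm hPc, isAffine_integral hPc, le_antisymm ?_ (hle μ₀), hle⟩
  refine le_csInf ⟨_, _, continuous_integral_pm hPc, isAffine_integral hPc, hPV, rfl⟩ ?_
  rintro r ⟨H, hc, hH, hHV, rfl⟩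
  have hcont : Continuous fun ω : Ω => H (diracProba ω) := hc.comp continuous_diracProba
  have hHint : Integrable H (τ : Measure (ProbabilityMeasure Ω)) := by
    refine Integrable.of_bound hc.measurable.aestronglyMeasurable
      ‖BoundedContinuousFunction.mkOfCompact ⟨_, hcont⟩‖ (Filter.Eventually.of_forall fun μ => ?_)
    rw [affine_repr hc hH μ]
    have := (BoundedContinuousFunction.mkOfCompact ⟨_, hcont⟩).norm_integral_le_norm
      (μ : Measure Ω)
    exact this
  calc ∫ ω, P ω ∂(μ₀ : Measure Ω) = ∫ μ, V μ ∂(τ : Measure (ProbabilityMeasure Ω)) := heq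
    _ ≤ ∫ μ, H μ ∂(τ : Measure (ProbabilityMeasure Ω)) := integral_mono hVint hHint hHV
    _ = ∫ μ, (∫ ω, H (diracProba ω) ∂(μ : Measure Ω)) ∂(τ : Measure (ProbabilityMeasure Ω)) :=
        integral_congr_ae (Filter.Eventually.of_forall fun μ => affine_repr hc hH μ)
    _ = ∫ ω, H (diracProba ω) ∂(μ₀ : Measure Ω) := hτ _ hcont
    _ = H μ₀ := (affine_repr hc hH μ₀).symm
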